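/- For every k > 0 and every x ∈ ℝ³ with |x| > 1, ∫_{S²} ( k² G^k(x−y) y + (Hess G^k)(x−y) y ) dσ(y) = 0. (That is, the outward unit normal ν_y = y of the unit sphere lies in the kernel of the shear part of the elastic single layer potential on S², for every shear wavenumber k.) -/

import Mathlib

open MeasureTheory

noncomputable section

/-- The fundamental solution `G^k(z) = -e^{ik|z|}/(4π|z|)` of the Helmholtz operator
`Δ + k²` in `ℝ³`. -/
noncomputable def G (k : ℂ) (z : EuclideanSpace ℝ (Fin 3)) : ℂ :=
  -Complex.exp (Complex.I * k * ‖z‖) / (4 * Real.pi * ‖z‖ : ℝ)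

/-- The `(i,j)` entry of the Hessian matrix of second partial derivatives of `G^k`. -/
noncomputable def HessG (k : ℂ) (z : EuclideanSpace ℝ (Fin 3)) (i j : Fin 3) : ℂ :=
  fderiv ℝ (fun v => fderiv ℝ (G k) v (EuclideanSpace.single j 1)) z
    (EuclideanSpace.single i 1)

/-- The surface measure on the unit sphere `S² ⊂ ℝ³`: the 2-dimensional Hausdorff
measure restricted to the sphere. -/
noncomputable def sphMeasure : Measure (EuclideanSpace ℝ (Fin 3)) :=
  (Measure.hausdorffMeasure 2).restrict (Metric.sphere (0 : EuclideanSpace ℝ (Fin 3)) 1)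


abbrev E3 := EuclideanSpace ℝ (Fin 3)

abbrev S2 : Set E3 := Metric.sphere (0 : E3) 1

lemma sphere_finite : (Measure.hausdorffMeasure 2 : Measure E3) S2 < ⊤ := by
  let f : (Fin 2 → ℝ) → E3 := fun p =>
    !₂[Real.sin (p 0) * Real.cos (p 1), Real.sin (p 0) * Real.sin (p 1), Real.cos (p 0)]
  have hf : ContDiff ℝ 1 f := by
    rw [contDiff_euclidean]
    intro i
    fin_cases i <;> simp [f] <;> fun_prop
  let K : Set (Fin 2 → ℝ) := Set.Icc (fun _ => -4) (fun _ => 4)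
  have hK : IsCompact K := isCompact_Icc
  obtain ⟨C, hC⟩ := hf.contDiffOn.exists_lipschitzOnWith (s := K) (by norm_num) (convex_Icc _ _) hK
  have h1 := hC.hausdorffMeasure_image_le (d := 2) (by norm_num)
  have h2 : (Measure.hausdorffMeasure 2 : Measure (Fin 2 → ℝ)) K < ⊤ := by
    have := hausdorffMeasure_pi_real (ι := Fin 2)
    simp only [Fintype.card_fin, Nat.cast_ofNat] at this
    rw [this]
    exact hK.measure_lt_top
  have h3 : S2 ⊆ f '' K := by
    intro y hy
    have hy1 : y 0 ^ 2 + y 1 ^ 2 + y 2 ^ 2 = 1 := by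
      have : ‖y‖ = 1 := by simpa using hy
      have h := EuclideanSpace.norm_sq_eq y
      rw [this, Fin.sum_univ_three] at h
      simp only [Real.norm_eq_abs, sq_abs] at h
      linarith
    let z : ℂ := ⟨y 0, y 1⟩
    have hz : ‖z‖ = Real.sqrt (1 - y 2 ^ 2) := by
      rw [Complex.norm_def, Complex.normSq_apply]
      congr 1
      simp only [z]
      linarith
    have hpi : Real.pi < 4 := Real.pi_lt_four
    refine ⟨![Real.arccos (y 2), z.arg], ?_, ?_⟩
    · have a1 := Real.arccos_nonneg (y 2)
      have a2 := Real.arccos_le_pi (y 2)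
      have a3 := Complex.neg_pi_lt_arg z
      have a4 := Complex.arg_le_pi z
      constructor <;> intro i <;> fin_cases i <;> simp <;> linarith
    · have b1 := Complex.norm_mul_cos_arg z
      have b2 := Complex.norm_mul_sin_arg z
      rw [hz, ← Real.sin_arccos] at b1 b2
      ext i
      fin_cases i
      · simpa [f] using b1
      · simpa [f] using b2
      · simp only [f]
        simp
        apply Real.cos_arccos <;> nlinarith
  refine lt_of_le_of_lt (measure_mono h3) (lt_of_le_of_lt h1 ?_)
  exact ENNReal.mul_lt_top (ENNReal.rpow_lt_top_of_nonneg (by norm_num) ENNReal.coe_ne_top) h2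

instance sphMeasure_finite : IsFiniteMeasure sphMeasure := by
  constructor
  simpa [sphMeasure] using sphere_finite

/-- the coordinate vector -/
abbrev e3 (j : Fin 3) : E3 := EuclideanSpace.single j (1 : ℝ)

/-- the rotation in the `(j,a)` plane -/
def rot (j a : Fin 3) (t : ℝ) (x : E3) : E3 :=
  x + ((Real.cos t - 1) * x j - Real.sin t * x a) • e3 j
    + (Real.sin t * x j + (Real.cos t - 1) * x a) • e3 a

lemma rot_norm (j a : Fin 3) (h : j ≠ a) (t : ℝ) (x : E3) : ‖rot j a t x‖ = ‖x‖ := by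
  have : ‖rot j a t x‖ ^ 2 = ‖x‖ ^ 2 := by
    rw [EuclideanSpace.norm_sq_eq, EuclideanSpace.norm_sq_eq]
    simp only [Fin.sum_univ_three, Real.norm_eq_abs, sq_abs]
    have hs := Real.sin_sq_add_cos_sq t
    fin_cases j <;> fin_cases a <;> simp [rot] at h ⊢ <;> grind
  exact (sq_eq_sq₀ (norm_nonneg _) (norm_nonneg _)).1 this

def rotL (j a : Fin 3) (h : j ≠ a) (t : ℝ) : E3 →ₗᵢ[ℝ] E3 where
  toFun := rot j a t
  map_add' x y := by
    simp only [rot, PiLp.add_apply]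
    module
  map_smul' c x := by
    simp only [rot, PiLp.smul_apply, smul_eq_mul, RingHom.id_apply]
    module
  norm_map' x := rot_norm j a h t x

lemma integral_rot (j a : Fin 3) (h : j ≠ a) (t : ℝ) (f : E3 → ℂ) :
    ∫ y, f (rot j a t y) ∂sphMeasure = ∫ y, f y ∂sphMeasure := by
  let e : E3 ≃ₗᵢ[ℝ] E3 := (rotL j a h t).toLinearIsometryEquiv rfl
  have h1 := (e.toIsometryEquiv.measurePreserving_hausdorffMeasure 2).restrict_preimage_emb
    e.toIsometryEquiv.toHomeomorph.measurableEmbedding S2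
  have h2 : e.toIsometryEquiv ⁻¹' S2 = S2 := by
    ext y
    simp
  rw [h2] at h1
  exact h1.integral_comp e.toIsometryEquiv.toHomeomorph.measurableEmbedding f

lemma ae_S2 : ∀ᵐ y ∂sphMeasure, y ∈ S2 :=
  ae_restrict_mem Metric.isClosed_sphere.measurableSet

lemma swap_lemma {a b : ℝ} (hab : a ≤ b) (F F' : ℝ → E3 → ℂ)
    (hc : ContinuousOn (Function.uncurry F') (Set.Icc a b ×ˢ S2))
    (hd : ∀ t ∈ Set.Icc a b, ∀ y ∈ S2, HasDerivAt (fun t => F t y) (F' t y) t) :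
    ∫ y, (F b y - F a y) ∂sphMeasure = ∫ t in a..b, ∫ y, F' t y ∂sphMeasure := by
  rw [intervalIntegral_integral_swap]
  · apply integral_congr_ae
    filter_upwards [ae_S2] with y hy
    symm
    apply intervalIntegral.integral_eq_sub_of_hasDerivAt
    · intro t ht
      rw [Set.uIcc_of_le hab] at ht
      exact hd t ht y hy
    · apply ContinuousOn.intervalIntegrable
      rw [Set.uIcc_of_le hab]
      exact hc.comp (f := fun t : ℝ => (t, y)) (by fun_prop) (fun t ht => ⟨ht, hy⟩)
  · have hS : sphMeasure = sphMeasure.restrict S2 := by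
      rw [sphMeasure, Measure.restrict_restrict Metric.isClosed_sphere.measurableSet, Set.inter_self]
    have : IntegrableOn (Function.uncurry F') (Set.Icc a b ×ˢ S2) (volume.prod sphMeasure) :=
      hc.integrableOn_compact (isCompact_Icc.prod (isCompact_sphere _ _))
    rw [IntegrableOn, ← Measure.prod_restrict, ← hS] at this
    rw [Set.uIoc_of_le hab]
    refine this.mono_measure ?_
    gcongr
    exact Set.Ioc_subset_Icc_self

lemma rot_hasDerivAt (j a : Fin 3) (h : j ≠ a) (y : E3) (t : ℝ) :
    HasDerivAt (fun t => rot j a t y) ((rot j a t y j) • e3 a - (rot j a t y a) • e3 j) t := by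
  have h1 : HasDerivAt (fun t => (Real.cos t - 1) * y j - Real.sin t * y a)
      (-Real.sin t * y j - Real.cos t * y a) t :=
    (((Real.hasDerivAt_cos t).sub_const 1).mul_const _).sub ((Real.hasDerivAt_sin t).mul_const _)
  have h2 : HasDerivAt (fun t => Real.sin t * y j + (Real.cos t - 1) * y a)
      (Real.cos t * y j + -Real.sin t * y a) t :=
    ((Real.hasDerivAt_sin t).mul_const _).add (((Real.hasDerivAt_cos t).sub_const 1).mul_const _)
  have h3 := ((h1.smul_const (e3 j)).const_add y).add (h2.smul_const (e3 a))
  refine h3.congr_deriv ?_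
  have ha : rot j a t y a = y a + (Real.sin t * y j + (Real.cos t - 1) * y a) := by
    simp [rot, h.symm]
  have hj : rot j a t y j = y j + ((Real.cos t - 1) * y j - Real.sin t * y a) := by
    simp [rot, h]
  rw [ha, hj]
  module

lemma contAt_fderiv {f : E3 → ℂ} {y : E3} (h : ContDiffAt ℝ 1 f y) :
    ContinuousAt (fderiv ℝ f) y :=
  (h.fderiv_right (m := 0) (by norm_num)).continuousAt

/-- infinitesimal rotation of a function -/
def Lrot (j a : Fin 3) (f : E3 → ℂ) (y : E3) : ℂ :=
  (y j : ℂ) * fderiv ℝ f y (e3 a) - (y a : ℂ) * fderiv ℝ f y (e3 j)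

lemma Lrot_cont (j a : Fin 3) (f : E3 → ℂ) (hf : ∀ y ∈ S2, ContDiffAt ℝ 1 f y) :
    ContinuousOn (Lrot j a f) S2 := by
  intro y hy
  have := contAt_fderiv (hf y hy)
  apply ContinuousAt.continuousWithinAt
  unfold Lrot
  fun_prop

lemma Lrot_integrable (j a : Fin 3) (f : E3 → ℂ) (hf : ∀ y ∈ S2, ContDiffAt ℝ 1 f y) :
    Integrable (Lrot j a f) sphMeasure := by
  have h := (Lrot_cont j a f hf).integrableOn_compact (μ := sphMeasure) (isCompact_sphere _ _)
  have hS : sphMeasure = sphMeasure.restrict S2 := by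
    rw [sphMeasure, Measure.restrict_restrict Metric.isClosed_sphere.measurableSet, Set.inter_self]
  rwa [IntegrableOn, ← hS] at h

lemma Lrot_zero (j a : Fin 3) (f : E3 → ℂ) (hf : ∀ y ∈ S2, ContDiffAt ℝ 1 f y) :
    ∫ y, Lrot j a f y ∂sphMeasure = 0 := by
  by_cases h : j = a
  · subst h
    simp [Lrot]
  have hmem : ∀ t, ∀ y ∈ S2, rot j a t y ∈ S2 := by
    intro t y hy
    have := rot_norm j a h t y
    simp only [mem_sphere_iff_norm, sub_zero] at hy ⊢
    rw [this, hy]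
  have key := swap_lemma (a := 0) (b := 2 * Real.pi) (by positivity)
    (fun t y => f (rot j a t y)) (fun t y => Lrot j a f (rot j a t y)) ?_ ?_
  · simp only [integral_rot j a h _ (Lrot j a f)] at key
    have h0 : ∀ y, rot j a (2 * Real.pi) y = rot j a 0 y := by
      intro y; simp [rot]
    simp only [h0, sub_self, integral_zero, intervalIntegral.integral_const, sub_zero] at key
    have := key.symm
    rw [smul_eq_zero] at this
    rcases this with h | h
    · exfalso
      have := Real.pi_pos
      linarith
    · exact h
  · refine (Lrot_cont j a f hf).comp (f := fun p : ℝ × E3 => rot j a p.1 p.2) ?_ ?_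
    · unfold rot
      fun_prop
    · rintro ⟨t, y⟩ ⟨_, hy⟩
      exact hmem t y hy
  · intro t _ y hy
    have hd := ((hf _ (hmem t y hy)).differentiableAt (by norm_num)).hasFDerivAt
    refine (hd.comp_hasDerivAt t (rot_hasDerivAt j a h y t)).congr_deriv ?_
    simp [Lrot]

lemma flux_zero (V : Fin 3 → E3 → ℂ)
    (hV : ∀ j, ∀ y : E3, ‖y‖ ≤ 1 → ContDiffAt ℝ 1 (V j) y)
    (hdiv : ∀ y : E3, ‖y‖ ≤ 1 → ∑ j, fderiv ℝ (V j) y (e3 j) = 0) :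
    ∫ y, ∑ j, V j y * (y j : ℂ) ∂sphMeasure = 0 := by
  have hmem : ∀ t ∈ Set.Icc (0:ℝ) 1, ∀ y ∈ S2, ‖t • y‖ ≤ 1 := by
    intro t ht y hy
    have hy : ‖y‖ = 1 := by simpa using hy
    rw [norm_smul, hy, mul_one, Real.norm_eq_abs, abs_of_nonneg ht.1]
    exact ht.2
  have key := swap_lemma (a := 0) (b := 1) (by norm_num)
    (fun t y => (t : ℂ) ^ 2 * ∑ j, V j (t • y) * (y j : ℂ))
    (fun t y => 2 * (t : ℂ) * ∑ j, V j (t • y) * (y j : ℂ)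
      + (t : ℂ) ^ 2 * ∑ j, fderiv ℝ (V j) (t • y) y * (y j : ℂ)) ?_ ?_
  · simp only [Complex.ofReal_one, one_pow, one_mul, one_smul, Complex.ofReal_zero, ne_eq,
      OfNat.ofNat_ne_zero, not_false_eq_true, zero_pow, zero_mul, sub_zero] at key
    rw [key]
    rw [intervalIntegral.integral_congr (g := fun _ => (0 : ℂ)), intervalIntegral.integral_zero]
    intro t ht
    rw [Set.uIcc_of_le (by norm_num)] at ht
    simp only
    let f : Fin 3 → Fin 3 → E3 → ℂ := fun j a y => (y a : ℂ) * V j (t • y)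
    have hlin : ∀ a : Fin 3, ∀ y : E3, HasFDerivAt (fun y : E3 => ((y a : ℝ) : ℂ))
        (Complex.ofRealCLM.comp (EuclideanSpace.proj a : E3 →L[ℝ] ℝ)) y := by
      intro a y
      exact (Complex.ofRealCLM.comp (EuclideanSpace.proj a : E3 →L[ℝ] ℝ)).hasFDerivAt
    have hf : ∀ j a, ∀ y ∈ S2, ContDiffAt ℝ 1 (f j a) y := by
      intro j a y hy
      have h1 : ContDiffAt ℝ 1 (fun y : E3 => ((y a : ℝ) : ℂ)) y :=
        (Complex.ofRealCLM.comp (EuclideanSpace.proj a : E3 →L[ℝ] ℝ)).contDiff.contDiffAt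
      have h2 : ContDiffAt ℝ 1 (fun y : E3 => V j (t • y)) y :=
        (hV j _ (hmem t ht y hy)).comp (f := fun y : E3 => t • y) y (by fun_prop)
      exact h1.mul h2
    have hfd : ∀ j a, ∀ y ∈ S2, ∀ v : E3, fderiv ℝ (f j a) y v =
        (y a : ℂ) * ((t : ℂ) * fderiv ℝ (V j) (t • y) v) + (v a : ℂ) * V j (t • y) := by
      intro j a y hy v
      have h1 := ((hV j _ (hmem t ht y hy)).differentiableAt (by norm_num)).hasFDerivAt
      have h2 : HasFDerivAt (fun y : E3 => t • y) (t • ContinuousLinearMap.id ℝ E3) y :=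
        (hasFDerivAt_id y).const_smul t
      have h3 := h1.comp (f := fun y : E3 => t • y) y h2
      have h4 := (hlin a y).mul h3
      have h5 : fderiv ℝ (f j a) y = _ := h4.fderiv
      rw [h5]
      simp
      ring
    have e1 : ∀ᵐ y ∂sphMeasure, (2 * (t : ℂ) * ∑ j, V j (t • y) * (y j : ℂ)
      + (t : ℂ) ^ 2 * ∑ j, fderiv ℝ (V j) (t • y) y * (y j : ℂ))
        = t * ∑ j, ∑ a, Lrot j a (f j a) y := by
      filter_upwards [ae_S2] with y hy
      have hdv := hdiv _ (hmem t ht y hy)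
      have hexp : ∀ j, fderiv ℝ (V j) (t • y) y = (y 0 : ℂ) * fderiv ℝ (V j) (t • y) (e3 0)
        + (y 1 : ℂ) * fderiv ℝ (V j) (t • y) (e3 1) + (y 2 : ℂ) * fderiv ℝ (V j) (t • y) (e3 2) := by
        intro j
        have : y = y 0 • e3 0 + y 1 • e3 1 + y 2 • e3 2 := by
          ext i; fin_cases i <;> simp
        generalize t • y = w
        conv_lhs => rw [this]
        simp
      simp only [Lrot, hfd _ _ y hy, hexp]
      simp only [Fin.sum_univ_three] at hdv ⊢
      simp at hdv ⊢
      linear_combination (t : ℂ) ^ 2 * ((y 0 : ℂ) ^ 2 + (y 1 : ℂ) ^ 2 + (y 2 : ℂ) ^ 2) * hdv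
    rw [integral_congr_ae e1, integral_const_mul, integral_finsetSum]
    · simp_rw [integral_finsetSum _ (fun a _ => Lrot_integrable _ a _ (hf _ a))]
      simp [Lrot_zero _ _ _ (hf _ _)]
    · intro j _
      exact integrable_finsetSum _ (fun a _ => Lrot_integrable _ a _ (hf _ a))
  · rintro ⟨t, y⟩ ⟨ht, hy⟩
    apply ContinuousAt.continuousWithinAt
    have hw := hmem t ht y hy
    have hsm : ContinuousAt (fun p : ℝ × E3 => p.1 • p.2) (t, y) := by fun_prop
    have c1 : ∀ j, ContinuousAt (fun p : ℝ × E3 => V j (p.1 • p.2)) (t, y) := fun j =>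
      ContinuousAt.comp (g := V j) (f := fun p : ℝ × E3 => p.1 • p.2) (hV j _ hw).continuousAt hsm
    have c2 : ∀ j, ContinuousAt (fun p : ℝ × E3 => fderiv ℝ (V j) (p.1 • p.2)) (t, y) := fun j =>
      ContinuousAt.comp (g := fderiv ℝ (V j)) (f := fun p : ℝ × E3 => p.1 • p.2)
        (contAt_fderiv (hV j _ hw)) hsm
    simp only [Fin.sum_univ_three]
    have := c1 0
    have := c1 1
    have := c1 2
    have := c2 0
    have := c2 1
    have := c2 2
    unfold Function.uncurry
    fun_prop
  · intro t ht y hy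
    have hw := hmem t ht y hy
    have d1 : ∀ j, HasDerivAt (fun t : ℝ => V j (t • y)) (fderiv ℝ (V j) (t • y) y) t := by
      intro j
      have h1 := ((hV j _ hw).differentiableAt (by norm_num)).hasFDerivAt
      have h2 : HasDerivAt (fun t : ℝ => t • y) y t := by
        simpa using (hasDerivAt_id t).smul_const y
      exact h1.comp_hasDerivAt t h2
    have d2 : HasDerivAt (fun t : ℝ => ∑ j, V j (t • y) * (y j : ℂ))
        (∑ j, fderiv ℝ (V j) (t • y) y * (y j : ℂ)) t :=
      HasDerivAt.fun_sum (fun j _ => (d1 j).mul_const _)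
    have d3 : HasDerivAt (fun t : ℝ => (t : ℂ) ^ 2) (2 * (t : ℂ)) t := by
      have h0 : HasDerivAt (fun r : ℝ => (r : ℂ)) 1 t := (hasDerivAt_id t).ofReal_comp
      have := h0.fun_pow 2
      simpa using this
    exact d3.mul d2

def g0 (k : ℝ) (r : ℝ) : ℂ := -Complex.exp (Complex.I * k * r) / (4 * Real.pi * r : ℝ)
def g1 (k : ℝ) (r : ℝ) : ℂ := -Complex.exp (Complex.I * k * r) / (4 * Real.pi) *
  (Complex.I * k / r ^ 2 - 1 / r ^ 3)
def g2 (k : ℝ) (r : ℝ) : ℂ := -Complex.exp (Complex.I * k * r) / (4 * Real.pi) *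
  (-k ^ 2 / r ^ 3 - 3 * Complex.I * k / r ^ 4 + 3 / r ^ 5)

lemma g0_deriv (k r : ℝ) (hr : r ≠ 0) : HasDerivAt (g0 k) (r * g1 k r) r := by
  have h0 : HasDerivAt (fun r : ℝ => (r : ℂ)) 1 r := (hasDerivAt_id r).ofReal_comp
  have h1 : HasDerivAt (fun r : ℝ => Complex.exp (Complex.I * k * r))
    (Complex.exp (Complex.I * k * r) * (Complex.I * k * 1)) r := (h0.const_mul _).cexp
  have hr' : (r : ℂ) ≠ 0 := by exact_mod_cast hr
  have hpi : (Real.pi : ℂ) ≠ 0 := by exact_mod_cast Real.pi_ne_zero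
  have h2 := h1.neg.div (h0.const_mul (4 * Real.pi : ℂ)) (by simp [hr, Real.pi_ne_zero])
  have : g0 k = fun r : ℝ => -Complex.exp (Complex.I * k * r) / (4 * Real.pi * r) := by
    ext r; simp [g0]
  rw [this]
  refine h2.congr_deriv ?_
  simp only [g1, Pi.neg_apply]
  field_simp
  ring

lemma g1_deriv (k r : ℝ) (hr : r ≠ 0) : HasDerivAt (g1 k) (r * g2 k r) r := by
  have h0 : HasDerivAt (fun r : ℝ => (r : ℂ)) 1 r := (hasDerivAt_id r).ofReal_comp
  have h1 : HasDerivAt (fun r : ℝ => Complex.exp (Complex.I * k * r))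
    (Complex.exp (Complex.I * k * r) * (Complex.I * k * 1)) r := (h0.const_mul _).cexp
  have hr' : (r : ℂ) ≠ 0 := by exact_mod_cast hr
  have hpi : (Real.pi : ℂ) ≠ 0 := by exact_mod_cast Real.pi_ne_zero
  have h2 := (h1.neg.div_const (4 * Real.pi : ℂ)).mul
    (((hasDerivAt_const r (Complex.I * k)).div (h0.pow 2) (by simpa using hr)).sub
      ((hasDerivAt_const r (1 : ℂ)).div (h0.pow 3) (by simpa using hr)))
  refine h2.congr_deriv ?_
  simp only [g2, Pi.neg_apply, Pi.pow_apply, Pi.sub_apply, Pi.div_apply]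
  field_simp
  ring_nf
  simp only [Complex.I_sq]
  ring

lemma radial_fderiv (p : ℝ → ℂ) (q : ℂ) (z : E3) (hz : z ≠ 0)
    (h : HasDerivAt p (‖z‖ * q) ‖z‖) :
    HasFDerivAt (fun z : E3 => p ‖z‖) (q • (Complex.ofRealCLM.comp (innerSL ℝ z))) z := by
  have hn : ‖z‖ ≠ 0 := norm_ne_zero_iff.2 hz
  have h1 : HasFDerivAt (fun z : E3 => ‖z‖) (‖z‖⁻¹ • innerSL ℝ z) z := by
    have h2 := (hasStrictFDerivAt_norm_sq z).hasFDerivAt.sqrt (by positivity)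
    have : (fun z : E3 => ‖z‖) = fun z : E3 => Real.sqrt (‖z‖ ^ 2) := by
      ext z; rw [Real.sqrt_sq (norm_nonneg _)]
    rw [this]
    refine h2.congr_fderiv ?_
    rw [Real.sqrt_sq (norm_nonneg _)]
    ext v
    simp
    field_simp
  refine (h.hasFDerivAt.comp z h1).congr_fderiv ?_
  ext v
  have hn' : (‖z‖ : ℂ) ≠ 0 := by exact_mod_cast hn
  simp
  field_simp

lemma inner_e3 (z : E3) (j : Fin 3) : inner ℝ z (e3 j) = z j := by
  rw [EuclideanSpace.inner_single_right]
  simp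

lemma G_eq (k : ℝ) : G k = fun z => g0 k ‖z‖ := rfl

lemma G_fderiv (k : ℝ) (z : E3) (hz : z ≠ 0) (j : Fin 3) :
    fderiv ℝ (G k) z (e3 j) = g1 k ‖z‖ * z j := by
  have hn : ‖z‖ ≠ 0 := norm_ne_zero_iff.2 hz
  rw [G_eq, (radial_fderiv _ _ z hz (g0_deriv k _ hn)).fderiv]
  simp [inner_e3]

lemma HessG_diag (k : ℝ) (z : E3) (hz : z ≠ 0) (j : Fin 3) :
    HessG k z j j = g1 k ‖z‖ + g2 k ‖z‖ * (z j : ℂ) ^ 2 := by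
  have hn : ‖z‖ ≠ 0 := norm_ne_zero_iff.2 hz
  have h1 : (fun v => fderiv ℝ (G k) v (e3 j)) =ᶠ[nhds z] fun z => g1 k ‖z‖ * z j := by
    filter_upwards [isOpen_ne.mem_nhds hz] with w hw
    exact G_fderiv k w hw j
  have hlin : HasFDerivAt (fun y : E3 => ((y j : ℝ) : ℂ))
        (Complex.ofRealCLM.comp (EuclideanSpace.proj j : E3 →L[ℝ] ℝ)) z :=
    (Complex.ofRealCLM.comp (EuclideanSpace.proj j : E3 →L[ℝ] ℝ)).hasFDerivAt
  have h2 := (radial_fderiv _ _ z hz (g1_deriv k _ hn)).fun_mul hlin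
  rw [HessG, h1.fderiv_eq, h2.fderiv]
  have := inner_e3 z j
  simp only [e3] at this
  simp [this]
  ring

lemma laplace_G (k : ℝ) (z : E3) (hz : z ≠ 0) : ∑ j, HessG k z j j = -(k : ℂ) ^ 2 * G k z := by
  have hn : ‖z‖ ≠ 0 := norm_ne_zero_iff.2 hz
  have hn' : (‖z‖ : ℂ) ≠ 0 := by exact_mod_cast hn
  have hpi : (Real.pi : ℂ) ≠ 0 := by exact_mod_cast Real.pi_ne_zero
  have hy1 : ((z 0 : ℝ) : ℂ) ^ 2 + (z 1 : ℂ) ^ 2 + (z 2 : ℂ) ^ 2 = (‖z‖ : ℂ) ^ 2 := by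
    have h := EuclideanSpace.norm_sq_eq z
    rw [Fin.sum_univ_three] at h
    simp only [Real.norm_eq_abs, sq_abs] at h
    exact_mod_cast h.symm
  simp only [Fin.sum_univ_three, HessG_diag k z hz]
  have : g1 k ‖z‖ * 3 + g2 k ‖z‖ * (‖z‖ : ℂ) ^ 2 = -(k : ℂ) ^ 2 * G k z := by
    simp only [g1, g2, G]
    push_cast
    field_simp
    ring
  rw [← this, ← hy1]
  ring

lemma G_smooth (k : ℝ) (z : E3) (hz : z ≠ 0) : ContDiffAt ℝ 4 (G k) z := by
  have hn : ‖z‖ ≠ 0 := norm_ne_zero_iff.2 hz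
  have h1 : ContDiffAt ℝ 4 (fun z : E3 => ‖z‖) z := contDiffAt_id.norm ℝ hz
  have h2 : ContDiffAt ℝ 4 (fun z : E3 => (‖z‖ : ℂ)) z :=
    Complex.ofRealCLM.contDiff.contDiffAt.comp z h1
  have hn' : (‖z‖ : ℂ) ≠ 0 := by exact_mod_cast hn
  have hpi : (Real.pi : ℂ) ≠ 0 := by exact_mod_cast Real.pi_ne_zero
  have : G k = fun z : E3 => -Complex.exp (Complex.I * k * ‖z‖) / (4 * Real.pi * ‖z‖) := by
    ext z; simp [G]
  rw [this]
  simp only [div_eq_mul_inv]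
  exact ((contDiffAt_const.mul h2).cexp.neg).mul
    ((contDiffAt_const.mul h2).inv (by simpa [Real.pi_ne_zero] using hz))

/-- first partial derivatives -/
def dG (k : ℝ) (j : Fin 3) (z : E3) : ℂ := fderiv ℝ (G k) z (e3 j)

lemma dG_smooth (k : ℝ) (j : Fin 3) (z : E3) (hz : z ≠ 0) : ContDiffAt ℝ 3 (dG k j) z :=
  ((G_smooth k z hz).fderiv_right (m := 3) (by norm_num)).clm_apply contDiffAt_const

lemma HessG_eq (k : ℝ) (z : E3) (i j : Fin 3) : HessG k z i j = fderiv ℝ (dG k j) z (e3 i) := rfl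

lemma Hess_smooth (k : ℝ) (i j : Fin 3) (z : E3) (hz : z ≠ 0) :
    ContDiffAt ℝ 2 (fun z => HessG k z i j) z :=
  ((dG_smooth k j z hz).fderiv_right (m := 2) (by norm_num)).clm_apply contDiffAt_const

lemma third_symm (k : ℝ) (i j l : Fin 3) (z : E3) (hz : z ≠ 0) :
    fderiv ℝ (fun z => HessG k z i j) z (e3 l) = fderiv ℝ (fun z => HessG k z l j) z (e3 i) := by
  have h1 : ContDiffAt ℝ 2 (fderiv ℝ (dG k j)) z :=
    (dG_smooth k j z hz).fderiv_right (m := 2) (by norm_num)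
  have h2 := (h1.differentiableAt (by norm_num)).hasFDerivAt
  have h3 : ∀ i l, fderiv ℝ (fun z => HessG k z i j) z (e3 l)
      = fderiv ℝ (fderiv ℝ (dG k j)) z (e3 l) (e3 i) := by
    intro i l
    have h4 := h2.clm_apply (hasFDerivAt_const (e3 i) z)
    have h5 : fderiv ℝ (fun z => HessG k z i j) z = _ := h4.fderiv
    rw [h5]
    simp
  rw [h3, h3]
  exact (dG_smooth k j z hz).isSymmSndFDerivAt (by simp; norm_num) _ _

lemma div_W (k : ℝ) (i : Fin 3) (z : E3) (hz : z ≠ 0) :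
    ∑ j, fderiv ℝ (fun z => (k : ℂ) ^ 2 * G k z * (if i = j then 1 else 0) + HessG k z i j) z (e3 j)
      = 0 := by
  have hG := (G_smooth k z hz).differentiableAt (by norm_num)
  have hH : ∀ i j, DifferentiableAt ℝ (fun z => HessG k z i j) z := fun i j =>
    (Hess_smooth k i j z hz).differentiableAt (by norm_num)
  have h1 : ∀ j, fderiv ℝ (fun z => (k : ℂ) ^ 2 * G k z * (if i = j then 1 else 0)
      + HessG k z i j) z (e3 j) = (k : ℂ) ^ 2 * fderiv ℝ (G k) z (e3 j) * (if i = j then 1 else 0)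
      + fderiv ℝ (fun z => HessG k z j j) z (e3 i) := by
    intro j
    rw [← third_symm k i j j z hz]
    have h2 := ((hG.hasFDerivAt.const_mul ((k : ℂ) ^ 2)).mul_const
      (if i = j then (1 : ℂ) else 0)).add (hH i j).hasFDerivAt
    have h3 : fderiv ℝ (fun z => (k : ℂ) ^ 2 * G k z * (if i = j then 1 else 0)
      + HessG k z i j) z = _ := h2.fderiv
    rw [h3]
    by_cases hij : i = j <;> simp [hij]
  rw [Finset.sum_congr rfl (fun j _ => h1 j), Finset.sum_add_distrib]
  have h4 : ∑ j, fderiv ℝ (fun z => HessG k z j j) z (e3 i)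
      = fderiv ℝ (fun z => ∑ j, HessG k z j j) z (e3 i) := by
    rw [fderiv_fun_sum (fun j _ => hH j j)]
    simp
  have h5 : (fun z => ∑ j, HessG k z j j) =ᶠ[nhds z] fun z => -(k : ℂ) ^ 2 * G k z := by
    filter_upwards [isOpen_ne.mem_nhds hz] with w hw
    exact laplace_G k w hw
  rw [h4, h5.fderiv_eq, (hG.hasFDerivAt.const_mul (-(k : ℂ) ^ 2)).fderiv]
  simp

/-- For every `k > 0` and every `x ∈ ℝ³` with `|x| > 1`,
`∫_{S²} (k² G^k(x−y) y + Hess G^k(x−y) y) dσ(y) = 0`; i.e. the outward unit normal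
`ν_y = y` lies in the kernel of the shear part of the elastic single layer potential
on the unit sphere, for every shear wavenumber `k`. -/
theorem normal_in_kernel_of_shear_single_layer
    (k : ℝ) (hk : 0 < k) (x : EuclideanSpace ℝ (Fin 3)) (hx : 1 < ‖x‖) :
    ∀ i : Fin 3,
      ∫ y, ((k : ℂ) ^ 2 * G k (x - y) * (y i : ℂ)
          + ∑ j : Fin 3, HessG k (x - y) i j * (y j : ℂ)) ∂sphMeasure = 0 := by
  intro i
  have hne : ∀ y : E3, ‖y‖ ≤ 1 → x - y ≠ 0 := by
    intro y hy h
    rw [sub_eq_zero] at h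
    subst h
    linarith
  let W : Fin 3 → E3 → ℂ := fun j z =>
    (k : ℂ) ^ 2 * G k z * (if i = j then 1 else 0) + HessG k z i j
  have hW : ∀ j z, z ≠ 0 → ContDiffAt ℝ 1 (W j) z := by
    intro j z hz
    exact ((contDiffAt_const.mul ((G_smooth k z hz).of_le (by norm_num))).mul
      contDiffAt_const).add ((Hess_smooth k i j z hz).of_le (by norm_num))
  have key := flux_zero (fun j y => W j (x - y)) ?_ ?_
  · rw [← key]
    congr 1
    ext y
    simp only [W, add_mul, Finset.sum_add_distrib]
    simp
  · intro j y hy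
    exact (hW j _ (hne y hy)).comp (f := fun y : E3 => x - y) y (by fun_prop)
  · intro y hy
    have h := div_W k i (x - y) (hne y hy)
    have h1 : ∀ j, fderiv ℝ (fun y => W j (x - y)) y (e3 j)
        = -fderiv ℝ (W j) (x - y) (e3 j) := by
      intro j
      have h2 := ((hW j _ (hne y hy)).differentiableAt (by norm_num)).hasFDerivAt
      have h3 : HasFDerivAt (fun y : E3 => x - y) (-ContinuousLinearMap.id ℝ E3) y :=
        (hasFDerivAt_id y).const_sub x
      have h4 := h2.comp (f := fun y : E3 => x - y) y h3
      have h5 : fderiv ℝ (fun y => W j (x - y)) y = _ := h4.fderiv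
      rw [h5]
      simp
    rw [Finset.sum_congr rfl (fun j _ => h1 j), Finset.sum_neg_distrib, neg_eq_zero]
    exact h
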